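/- Let n ≥ 2, a = (a_1,…,a_n) ∈ ℂ^n and a' = (a'_1,…,a'_{n−1}) ∈ ℂ^{n−1} with every a_j and a'_k purely imaginary, and let s ∈ ℂ with Re(s) > 0. Then I_{n,n−1;a,a'}(s) = ∏_{1≤j≤n} ∏_{1≤k≤n−1} Γ_ℝ(s+a_j+a'_k). -/

import Mathlib

open MeasureTheory Complex

noncomputable section

/-- `Γ_ℝ(s) = π^{-s/2} Γ(s/2)`. -/
def GammaR (s : ℂ) : ℂ := (Real.pi : ℂ) ^ (-s / 2) * Complex.Gamma (s / 2)

/-- Modified Bessel function of the second kind, via its integral representation. -/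
def BesselK (ν : ℂ) (y : ℝ) : ℂ :=
  (1 / 2) * ∫ t in Set.Ioi (0 : ℝ),
    Complex.exp (-((y : ℂ) / 2) * ((t : ℂ) + 1 / (t : ℂ))) * (t : ℂ) ^ ν / (t : ℂ)

/-- Extend a finite real tuple to `ℕ`, defaulting to `1`. -/
def extR {k : ℕ} (t : Fin k → ℝ) : ℕ → ℝ := fun i => if h : i < k then t ⟨i, h⟩ else 1

/-- Extend a finite real tuple to `ℕ`, defaulting to `0`. -/
def extR0 {k : ℕ} (t : Fin k → ℝ) : ℕ → ℝ := fun i => if h : i < k then t ⟨i, h⟩ else 0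

/-- The positive orthant. -/
def posSet (k : ℕ) : Set (Fin k → ℝ) := {t | ∀ j, 0 < t j}

/-- `|a| = a_1 + ⋯ + a_n` (0-based indexing). -/
def sumA (n : ℕ) (a : ℕ → ℂ) : ℂ := ∑ j ∈ Finset.range n, a j

/-- `ã_j = a_{j+1} + a_1/(n-1)` (0-based indexing). -/
def tildeA (n : ℕ) (a : ℕ → ℂ) : ℕ → ℂ := fun j => a (j + 1) + a 0 / ((n : ℂ) - 1)

/-- The normalized radial part `Ŵ^A_{n,a}` of the class one `GL_n(ℝ)` Whittaker function,
as a function of `(y_1,…,y_{n-1})` (0-based indexing). -/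
def WhittAr : ℕ → (ℕ → ℂ) → (ℕ → ℝ) → ℂ
  | 0, _, _ => 1
  | 1, _, _ => 1
  | 2, a, y => 2 * ((y 0 : ℂ) ^ ((a 0 + a 1) / 2)) *
      BesselK ((a 0 - a 1) / 2) (2 * Real.pi * y 0)
  | (n + 3), a, y =>
      ∫ t in posSet (n + 2),
        WhittAr (n + 2) (tildeA (n + 3) a)
            (fun j => y (j + 1) * Real.sqrt (extR t (j + 1) / extR t j)) *
          (∏ j ∈ Finset.range (n + 2),
            Complex.exp (((-(Real.pi * y j) ^ 2 * extR t j - 1 / extR t j : ℝ) : ℂ)) *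
              ((Real.pi * y j : ℝ) : ℂ) ^ ((((n + 2 - j : ℕ) : ℂ) * a 0) / ((n + 2 : ℕ) : ℂ)) *
              ((extR t j : ℝ) : ℂ) ^ ((((n + 3 : ℕ) : ℂ) * a 0) / (2 * ((n + 2 : ℕ) : ℂ)))) *
          ((Real.pi * extR t (n + 1) : ℝ) : ℂ) ^ (-(sumA (n + 3) a) / 2) *
          (∏ j ∈ Finset.range (n + 2), ((extR t j : ℝ) : ℂ))⁻¹

/-- `Ŵ^A_{n,a}` as a function of the full tuple `(y_1,…,y_n)`. -/
def WhittAhat (n : ℕ) (a : ℕ → ℂ) (y : ℕ → ℝ) : ℂ :=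
  ((y (n - 1) : ℝ) : ℂ) ^ sumA n a * WhittAr n a y

/-- The Mellin transform `U_{n,a}` (0-based: `s j` stands for `s_{j+1}`). -/
def Ufun (n : ℕ) (a : ℕ → ℂ) (s : ℕ → ℂ) : ℂ :=
  ∫ y in posSet (n - 1),
    WhittAr n a (extR y) *
      ∏ j ∈ Finset.range (n - 1), ((extR y j : ℝ) : ℂ) ^ s j / ((extR y j : ℝ) : ℂ)

/-- The normalized radial part `Ŵ^B_{n,b}` of the class one `SO_{2n+1}(ℝ)` Whittaker function. -/
def WhittBr : ℕ → (ℕ → ℂ) → (ℕ → ℝ) → ℂ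
  | 0, _, _ => 1
  | 1, b, y => 2 * BesselK (b 0 / 2) (2 * Real.pi * y 0)
  | (n + 2), b, y =>
      ∫ p in (posSet (n + 2) ×ˢ posSet (n + 1)),
        WhittBr (n + 1) b
            (fun j =>
              if j < n then
                y (j + 1) *
                  Real.sqrt (extR p.1 (j + 1) * extR p.2 (j + 1) /
                    (extR p.1 (j + 2) * extR p.2 j))
              else y (n + 1) * Real.sqrt (extR p.1 (n + 1) / extR p.2 n)) *
          (∏ j ∈ Finset.range (n + 2),
            Complex.exp (((-(Real.pi * y j) ^ 2 * extR p.1 j - 1 / extR p.1 j : ℝ) : ℂ)) *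
              ((Real.pi * y j : ℝ) : ℂ) ^ b (n + 1)) *
          (∏ j ∈ Finset.range (n + 1),
            Complex.exp (((-(Real.pi * y j) ^ 2 * (extR p.1 j / extR p.1 (j + 1)) * extR p.2 j -
                  1 / extR p.2 j : ℝ) : ℂ)) *
              ((extR p.1 (j + 1) * extR p.2 j : ℝ) : ℂ) ^ (b (n + 1) / 2)) *
          ((extR p.1 0 : ℝ) : ℂ) ^ b (n + 1) *
          (∏ j ∈ Finset.range (n + 1), ((extR p.2 j : ℝ) : ℂ))⁻¹ *
          (∏ j ∈ Finset.range (n + 2), ((extR p.1 j : ℝ) : ℂ))⁻¹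

/-- The Mellin transform `V_{n,b}` (0-based: `s j` stands for `s_{j+1}`). -/
def Vfun (n : ℕ) (b : ℕ → ℂ) (s : ℕ → ℂ) : ℂ :=
  ∫ y in posSet n,
    WhittBr n b (extR y) *
      ∏ j ∈ Finset.range n, ((extR y j : ℝ) : ℂ) ^ s j / ((extR y j : ℝ) : ℂ)

/-- Integral over the vertical line `Re z = c`, i.e. `i·∫_ℝ f(c+it) dt`. -/
def VInt (c : ℝ) (f : ℂ → ℂ) : ℂ := Complex.I * ∫ t : ℝ, f (c + t * Complex.I)

/-- Iterated integral over `k` vertical lines with abscissas `c 0, …, c (k-1)`;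
the integrand is fed the contour points as a 0-based sequence. -/
def VIntK (k : ℕ) (c : ℕ → ℝ) (f : (ℕ → ℂ) → ℂ) : ℂ :=
  Complex.I ^ k * ∫ t : Fin k → ℝ, f (fun i => (c i : ℂ) + (extR0 t i : ℝ) * Complex.I)



/-- The archimedean `GL_n × GL_m` zeta integral (`m < n`) in torus coordinates. -/
def zetaGLm (n m : ℕ) (a a' : ℕ → ℂ) (s : ℂ) : ℂ :=
  (2 : ℂ) ^ m * ∫ y in posSet m,
    WhittAhat n a (extR y) * WhittAhat m a' (extR y) *
      ∏ j ∈ Finset.range m,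
        ((extR y j : ℝ) : ℂ) ^ (((j + 1 : ℕ) : ℂ) * s) / ((extR y j : ℝ) : ℂ)

/-!
In the coordinates `π * y_j = exp ((x_j - x_{j+1}) / 2)` the class one Whittaker functions become,
up to elementary factors, the open Toda functions `todaPsi`, given by a recursion of Givental type.
Following Gerasimov, Lebedev and Oblezin, the Baxter operator with parameter `m` intertwines the
recursion operators up to a Gamma factor, so the `GL_n` Toda function with parameters `a` is an
eigenfunction of it with eigenvalue `∏ j, Γ(m + a_j)`. Unfolding one step of the recursion in the
`GL_{n+1} × GL_n` integral, restricted to `x_{n+1} = 0`, produces a Baxter operator and leaves the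
`GL_n × GL_n` integral with weight `exp (-exp y_n)`; unfolding the other Toda function there leaves
a `GL_n × GL_{n-1}` integral. Each step splits off one row of Gamma factors, and the product formula
follows by induction.

The interchanges of integrals are justified by the identities themselves: at real parameters all
integrands are positive, and an integral whose value is nonzero converges absolutely.
-/

open scoped ComplexOrder

-- A bound `‖f x‖ ≤ F x` in the partial order of `ℂ` forces `F x` to be real as well. This lets the
-- complex-valued functions below, taken at real parameters, serve as their own majorants.

section Domination

variable {X Y : Type*} [MeasurableSpace X] [MeasurableSpace Y] {μ : Measure X} {ν : Measure Y}

theorem le_norm_of_ofReal_le {r : ℝ} {z : ℂ} (h : (r : ℂ) ≤ z) : r ≤ ‖z‖ :=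
  (Complex.le_def.1 h).1.trans (Complex.re_le_norm z)

theorem ofReal_norm_mul_le {w₁ w₂ z₁ z₂ : ℂ} (h₁ : (‖w₁‖ : ℂ) ≤ z₁) (h₂ : (‖w₂‖ : ℂ) ≤ z₂) :
    (‖w₁ * w₂‖ : ℂ) ≤ z₁ * z₂ := by
  rw [norm_mul, ofReal_mul]
  have h₀ (w : ℂ) : (0 : ℂ) ≤ ‖w‖ := zero_le_real.2 (norm_nonneg w)
  exact mul_le_mul h₁ h₂ (h₀ w₂) ((h₀ w₁).trans h₁)

theorem integral_pos_of_forall_pos [NeZero μ] {F : X → ℂ} (hF : Integrable F μ)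
    (hpos : ∀ x, 0 < F x) : 0 < ∫ x, F x ∂μ := by
  have hre (x : X) : 0 < (F x).re := (Complex.pos_iff.1 (hpos x)).1
  have hF' : ∫ x, F x ∂μ = ((∫ x, (F x).re ∂μ : ℝ) : ℂ) := by
    rw [← integral_complex_ofReal]
    exact integral_congr_ae (.of_forall fun x ↦ Complex.eq_re_of_ofReal_le (hpos x).le)
  rw [hF', zero_lt_real, integral_pos_iff_support_of_nonneg (fun x ↦ (hre x).le) hF.re]
  have hsupp : (Function.support fun x ↦ (F x).re) = Set.univ :=
    Set.eq_univ_of_forall fun x ↦ (hre x).ne'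
  rw [hsupp]
  exact Measure.measure_univ_pos.2 (NeZero.ne μ)

theorem ofReal_integral_norm_le {f F : X → ℂ} (hF : Integrable F μ)
    (h : ∀ x, (‖f x‖ : ℂ) ≤ F x) : ((∫ x, ‖f x‖ ∂μ : ℝ) : ℂ) ≤ ∫ x, F x ∂μ := by
  have hF' : ∫ x, F x ∂μ = ((∫ x, ‖F x‖ ∂μ : ℝ) : ℂ) := by
    rw [← integral_complex_ofReal]
    exact integral_congr_ae (.of_forall fun x ↦
      (Complex.norm_of_nonneg' ((zero_le_real.2 (norm_nonneg _)).trans (h x))).symm)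
  rw [hF', real_le_real]
  exact integral_mono_of_nonneg (.of_forall fun _ ↦ norm_nonneg _) hF.norm
    (.of_forall fun x ↦ le_norm_of_ofReal_le (h x))

theorem ofReal_norm_integral_le {f F : X → ℂ} (hF : Integrable F μ)
    (h : ∀ x, (‖f x‖ : ℂ) ≤ F x) : (‖∫ x, f x ∂μ‖ : ℂ) ≤ ∫ x, F x ∂μ :=
  (real_le_real.2 (norm_integral_le_integral_norm f)).trans (ofReal_integral_norm_le hF h)

theorem integral_mul_integral_swap_of_dominated [SFinite μ] [SFinite ν] {K K' : X → Y → ℂ}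
    {f f' : X → ℂ} {g g' : Y → ℂ} (hK : Measurable (Function.uncurry K)) (hf : Measurable f)
    (hg : Measurable g) (hKK' : ∀ x y, (‖K x y‖ : ℂ) ≤ K' x y) (hff' : ∀ x, (‖f x‖ : ℂ) ≤ f' x)
    (hgg' : ∀ y, (‖g y‖ : ℂ) ≤ g' y) (hint : ∀ y, Integrable (fun x ↦ K' x y * f' x) μ)
    (hint' : Integrable (fun y ↦ (∫ x, K' x y * f' x ∂μ) * g' y) ν) :
    ∫ x, f x * ∫ y, K x y * g y ∂ν ∂μ = ∫ y, (∫ x, K x y * f x ∂μ) * g y ∂ν := by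
  have hle (x : X) (y : Y) : (‖K x y * f x‖ : ℂ) ≤ K' x y * f' x :=
    ofReal_norm_mul_le (hKK' x y) (hff' x)
  have hmeas : Measurable (Function.uncurry fun x y ↦ K x y * f x * g y) :=
    (hK.mul (hf.comp measurable_fst)).mul (hg.comp measurable_snd)
  have hprod : Integrable (Function.uncurry fun x y ↦ K x y * f x * g y) (μ.prod ν) := by
    refine (integrable_prod_iff' hmeas.aestronglyMeasurable).2 ⟨.of_forall fun y ↦ ?_, ?_⟩
    · have hmeas_y : Measurable fun x ↦ K x y * f x :=
        (hK.comp (measurable_id.prodMk measurable_const)).mul hf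
      exact ((hint y).mono hmeas_y.aestronglyMeasurable (.of_forall fun x ↦
        le_norm_of_ofReal_le (hle x y))).mul_const (g y)
    · refine hint'.mono hmeas.norm.stronglyMeasurable.integral_prod_left'.aestronglyMeasurable
        (.of_forall fun y ↦ ?_)
      have hle_y := le_norm_of_ofReal_le (ofReal_integral_norm_le (hint y) (hle · y))
      have hgg'_y := le_norm_of_ofReal_le (hgg' y)
      rw [Real.norm_of_nonneg (integral_nonneg fun _ ↦ norm_nonneg _), norm_mul]
      simp only [Function.uncurry_apply_pair, norm_mul _ (g y), integral_mul_const]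
      gcongr
  calc ∫ x, f x * ∫ y, K x y * g y ∂ν ∂μ = ∫ x, ∫ y, K x y * f x * g y ∂ν ∂μ := by
        refine integral_congr_ae (.of_forall fun x ↦ ?_)
        simp only [mul_right_comm _ (f x), integral_mul_const, mul_comm (f x)]
    _ = ∫ y, ∫ x, K x y * f x * g y ∂μ ∂ν := integral_integral_swap hprod
    _ = ∫ y, (∫ x, K x y * f x ∂μ) * g y ∂ν := by simp only [integral_mul_const]

end Domination

section BesselIntegrals

theorem integral_Ioi_zero_eq_integral_exp_smul {E : Type*} [NormedAddCommGroup E]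
    [NormedSpace ℝ E] (f : ℝ → E) :
    ∫ t in Set.Ioi 0, f t = ∫ x, Real.exp x • f (Real.exp x) := by
  have h := integral_image_eq_integral_abs_deriv_smul MeasurableSet.univ
    (fun x _ ↦ (Real.hasDerivAt_exp x).hasDerivWithinAt) Real.exp_injective.injOn f
  simpa only [Set.image_univ, Real.range_exp, Real.abs_exp, setIntegral_univ] using h

theorem ofReal_exp_cpow (x : ℝ) (w : ℂ) : ((Real.exp x : ℝ) : ℂ) ^ w = cexp (x * w) := by
  rw [ofReal_exp, cpow_def_of_ne_zero (Complex.exp_ne_zero _), ← ofReal_exp,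
    ← ofReal_log (Real.exp_pos x).le, Real.log_exp]

/-- The integrand of `∫ t ^ l * exp (-(A * t + B / t)) dt / t` in the logarithmic variable
`x = log t`. The integral is a Bessel function for `B ≠ 0` and a Gamma function for `B = 0`. -/
def besselIntegrand (l : ℂ) (A B x : ℝ) : ℂ :=
  cexp (l * x - (A * Real.exp x + B * Real.exp (-x) : ℝ))

theorem integral_besselIntegrand_zero {l : ℂ} (hl : 0 < l.re) {A : ℝ} (hA : 0 < A) :
    ∫ x, besselIntegrand l A 0 x = cexp (-(l * Real.log A)) * Complex.Gamma l := by
  have hcpow : (1 / (A : ℂ)) ^ l = cexp (-(l * Real.log A)) := by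
    rw [← Real.exp_log hA, one_div, ← ofReal_inv, ← Real.exp_neg, ofReal_exp_cpow, Real.log_exp]
    push_cast
    ring_nf
  rw [← hcpow, ← integral_cpow_mul_exp_neg_mul_Ioi hl (by simpa using hA),
    integral_Ioi_zero_eq_integral_exp_smul]
  refine integral_congr_ae (.of_forall fun x ↦ ?_)
  simp only [besselIntegrand]
  rw [real_smul, ofReal_exp_cpow, ofReal_exp, ← Complex.exp_add, ← Complex.exp_add]
  push_cast
  ring_nf

theorem norm_besselIntegrand (l : ℂ) (A B x : ℝ) :
    ‖besselIntegrand l A B x‖ = Real.exp (l.re * x - (A * Real.exp x + B * Real.exp (-x))) := by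
  rw [besselIntegrand, Complex.norm_exp, sub_re, re_mul_ofReal, ofReal_re]

theorem integrable_besselIntegrand {l : ℂ} (hl : 0 < l.re) {A B : ℝ} (hA : 0 < A) (hB : 0 ≤ B) :
    Integrable (besselIntegrand l A B) := by
  have h₀ : Integrable (besselIntegrand l A 0) := Integrable.of_integral_ne_zero <| by
    rw [integral_besselIntegrand_zero hl hA]
    exact mul_ne_zero (Complex.exp_ne_zero _) (Complex.Gamma_ne_zero_of_re_pos hl)
  refine h₀.mono (Continuous.aestronglyMeasurable ?_) (.of_forall fun x ↦ ?_)
  · unfold besselIntegrand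
    fun_prop
  · rw [norm_besselIntegrand, norm_besselIntegrand]
    gcongr

theorem integral_besselIntegrand_eq_mul_neg (l : ℂ) {A B : ℝ} (hA : 0 < A) (hB : 0 < B) :
    ∫ x, besselIntegrand l A B x =
      cexp (l * (Real.log B - Real.log A : ℝ)) * ∫ x, besselIntegrand (-l) A B x := by
  rw [← integral_const_mul, ← integral_sub_left_eq_self _ _ (Real.log B - Real.log A)]
  refine integral_congr_ae (.of_forall fun x ↦ ?_)
  have hAB : A * Real.exp (Real.log B - Real.log A - x) = B * Real.exp (-x) := by
    rw [sub_eq_add_neg, Real.exp_add, Real.exp_sub, Real.exp_log hA, Real.exp_log hB]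
    field_simp
  have hBA : B * Real.exp (-(Real.log B - Real.log A - x)) = A * Real.exp x := by
    rw [neg_sub, sub_sub_eq_add_sub, Real.exp_sub, Real.exp_add, Real.exp_log hA, Real.exp_log hB]
    field_simp
  simp only [besselIntegrand, hAB, hBA, ← Complex.exp_add]
  push_cast
  ring_nf

end BesselIntegrals

section Kernels

variable {n : ℕ}

/-- The interlacing energy `∑ i, (exp (x i - z i) + exp (z i - x (i + 1)))` of the
Givental-type recursion for the open Toda chain. -/
def todaEnergy (x : Fin (n + 1) → ℝ) (z : Fin n → ℝ) : ℝ :=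
  ∑ i, (Real.exp (x i.castSucc - z i) + Real.exp (z i - x i.succ))

/-- The kernel of the recursion from the `GL_n` to the `GL_{n+1}` Toda functions, with spectral
parameter `l`. -/
def todaKernel (l : ℂ) (x : Fin (n + 1) → ℝ) (z : Fin n → ℝ) : ℂ :=
  cexp (l * (∑ i, x i - ∑ i, z i : ℝ) - (todaEnergy x z : ℝ))

/-- The energy `∑ i, exp (x i - y i) + ∑ i, exp (y i - x (i + 1))` of the Baxter operator. It is
the interlacing energy of `x` and `y` without its last term. -/
def baxterEnergy : {n : ℕ} → (Fin n → ℝ) → (Fin n → ℝ) → ℝ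
  | 0, _, _ => 0
  | n + 1, x, y => todaEnergy x (Fin.init y) + Real.exp (x (Fin.last n) - y (Fin.last n))

/-- The kernel of the Baxter operator of the `GL_n` Toda chain, with spectral parameter `l`. -/
def baxterKernel (l : ℂ) (x y : Fin n → ℝ) : ℂ :=
  cexp (l * (∑ i, x i - ∑ i, y i : ℝ) - (baxterEnergy x y : ℝ))

/-- The `GL_n` Toda function with spectral parameters `a 0, …, a (n - 1)`: the class one
`GL_n(ℝ)` Whittaker function, with normalized arguments, in logarithmic coordinates. -/
def todaPsi : (n : ℕ) → (ℕ → ℂ) → (Fin n → ℝ) → ℂ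
  | 0, _, _ => 1
  | n + 1, a, x => ∫ z, todaKernel (a 0) x z * todaPsi n (fun j ↦ a (j + 1)) z

/-- The weight `exp (-exp y_n)` that couples two `GL_n` Toda functions in the `GL_n × GL_n`
integral. -/
def boundaryWeight (y : Fin (n + 1) → ℝ) : ℂ :=
  cexp (-(Real.exp (y (Fin.last n)) : ℝ))

/-- The tuple `x` followed by `0`: the point of `ℝ ^ (n + 1)` at which the `GL_{n+1}` Toda
function is restricted to `GL_n`. -/
def snocZero (x : Fin n → ℝ) : Fin (n + 1) → ℝ :=
  Fin.snoc x 0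

@[simp]
theorem snocZero_castSucc (x : Fin n → ℝ) (i : Fin n) : snocZero x i.castSucc = x i :=
  Fin.snoc_castSucc (α := fun _ ↦ ℝ) 0 x i

@[simp]
theorem snocZero_last (x : Fin n → ℝ) : snocZero x (Fin.last n) = 0 :=
  Fin.snoc_last (α := fun _ ↦ ℝ) 0 x

theorem init_snocZero (x : Fin n → ℝ) : Fin.init (snocZero x) = x :=
  Fin.init_snoc (α := fun _ ↦ ℝ) 0 x

theorem baxterEnergy_snocZero (y : Fin (n + 1) → ℝ) (z : Fin n → ℝ) :
    baxterEnergy y (snocZero z) = todaEnergy y z + Real.exp (y (Fin.last n)) := by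
  rw [baxterEnergy, init_snocZero, snocZero_last, sub_zero]

theorem todaEnergy_snocZero (x y : Fin (n + 1) → ℝ) :
    todaEnergy (snocZero x) y = baxterEnergy x y + Real.exp (y (Fin.last n)) := by
  simp only [baxterEnergy, todaEnergy, Fin.sum_univ_castSucc (n := n), Fin.init,
    snocZero_castSucc, Fin.succ_castSucc, Fin.succ_last, snocZero_last, sub_zero]
  ring

theorem sum_snocZero (x : Fin n → ℝ) : ∑ i, snocZero x i = ∑ i, x i := by
  rw [Fin.sum_univ_castSucc, snocZero_last, add_zero]
  simp only [snocZero_castSucc]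

theorem todaKernel_mul_boundaryWeight (l : ℂ) (y : Fin (n + 1) → ℝ) (z : Fin n → ℝ) :
    todaKernel l y z * boundaryWeight y = baxterKernel l y (snocZero z) := by
  rw [todaKernel, boundaryWeight, baxterKernel, baxterEnergy_snocZero, sum_snocZero,
    ← Complex.exp_add, ofReal_add, sub_add_eq_sub_sub, sub_eq_add_neg _ ((Real.exp _ : ℝ) : ℂ)]

theorem todaKernel_snocZero (l : ℂ) (x y : Fin (n + 1) → ℝ) :
    todaKernel l (snocZero x) y = baxterKernel l x y * boundaryWeight y := by
  rw [todaKernel, boundaryWeight, baxterKernel, todaEnergy_snocZero, sum_snocZero,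
    ← Complex.exp_add, ofReal_add, sub_add_eq_sub_sub, sub_eq_add_neg _ ((Real.exp _ : ℝ) : ℂ)]

theorem measurable_todaKernel (l : ℂ) :
    Measurable (Function.uncurry (todaKernel (n := n) l)) := by
  unfold todaKernel todaEnergy Function.uncurry
  fun_prop

theorem measurable_baxterKernel (l : ℂ) :
    Measurable (Function.uncurry (baxterKernel (n := n) l)) := by
  unfold baxterKernel Function.uncurry
  cases n <;> simp only [baxterEnergy, todaEnergy, Fin.init] <;> fun_prop

theorem measurable_boundaryWeight : Measurable (boundaryWeight (n := n)) := by
  unfold boundaryWeight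
  fun_prop

theorem measurable_todaPsi (n : ℕ) (a : ℕ → ℂ) : Measurable (todaPsi n a) := by
  induction n generalizing a with
  | zero => exact measurable_const
  | succ n ih =>
    have hmeas : Measurable (Function.uncurry fun (x : Fin (n + 1) → ℝ) (z : Fin n → ℝ) ↦
        todaKernel (a 0) x z * todaPsi n (fun j ↦ a (j + 1)) z) :=
      (measurable_todaKernel (a 0)).mul ((ih _).comp measurable_snd)
    exact hmeas.stronglyMeasurable.integral_prod_right.measurable

theorem ofReal_norm_cexp_mul_sub (l : ℂ) (u v : ℝ) :
    (‖cexp (l * u - v)‖ : ℂ) = cexp (l.re * u - v) := by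
  rw [Complex.norm_exp, sub_re, re_mul_ofReal, ofReal_re]
  push_cast
  rfl

theorem ofReal_norm_todaKernel (l : ℂ) (x : Fin (n + 1) → ℝ) (z : Fin n → ℝ) :
    (‖todaKernel l x z‖ : ℂ) = todaKernel l.re x z :=
  ofReal_norm_cexp_mul_sub _ _ _

theorem ofReal_norm_baxterKernel (l : ℂ) (x y : Fin n → ℝ) :
    (‖baxterKernel l x y‖ : ℂ) = baxterKernel l.re x y :=
  ofReal_norm_cexp_mul_sub _ _ _

theorem ofReal_norm_boundaryWeight (y : Fin (n + 1) → ℝ) :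
    (‖boundaryWeight y‖ : ℂ) = boundaryWeight y := by
  simpa [boundaryWeight] using ofReal_norm_cexp_mul_sub 0 0 (Real.exp (y (Fin.last n)))

theorem todaKernel_ofReal_pos (l : ℝ) (x : Fin (n + 1) → ℝ) (z : Fin n → ℝ) :
    0 < todaKernel l x z := by
  rw [← ofReal_re l, ← ofReal_norm_todaKernel, zero_lt_real, norm_pos_iff]
  exact Complex.exp_ne_zero _

end Kernels

section Growth

variable {n : ℕ}

theorem exp_neg_exp_le (k : ℕ) (u : ℝ) :
    Real.exp (-Real.exp u) ≤ k.factorial * Real.exp (-(k * u)) := by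
  have h := Real.pow_div_factorial_le_exp (Real.exp u) (Real.exp_pos u).le k
  rw [← Real.exp_nat_mul, div_le_iff₀ (by positivity)] at h
  rw [Real.exp_neg, Real.exp_neg, ← div_eq_mul_inv, inv_eq_one_div,
    div_le_div_iff₀ (Real.exp_pos _) (Real.exp_pos _)]
  linarith

theorem exp_neg_todaEnergy_le (k : ℕ) (x : Fin (n + 1) → ℝ) (z : Fin n → ℝ) :
    Real.exp (-todaEnergy x z) ≤ k.factorial * Real.exp (k * (‖x‖ - ‖z‖)) := by
  have henergy : ‖z‖ = 0 ∨ ∃ u, ‖z‖ - ‖x‖ ≤ u ∧ Real.exp u ≤ todaEnergy x z := by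
    rcases isEmpty_or_nonempty (Fin n) with _ | _
    · exact .inl (by rw [Subsingleton.elim z 0, norm_zero])
    obtain ⟨i, hi⟩ := Finite.exists_max fun i ↦ ‖z i‖
    have hz : ‖z‖ ≤ |z i| := (pi_norm_le_iff_of_nonempty z).2 hi
    have hle : Real.exp (x i.castSucc - z i) + Real.exp (z i - x i.succ) ≤ todaEnergy x z :=
      Finset.single_le_sum (f := fun i ↦ Real.exp (x i.castSucc - z i) + Real.exp (z i - x i.succ))
        (fun _ _ ↦ by positivity) (Finset.mem_univ i)
    have hx (j : Fin (n + 1)) : |x j| ≤ ‖x‖ := norm_le_pi_norm x j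
    rcases abs_cases (z i) with h | h
    · exact .inr ⟨z i - x i.succ, by linarith [le_abs_self (x i.succ), hx i.succ],
        by linarith [Real.exp_pos (x i.castSucc - z i)]⟩
    · exact .inr ⟨x i.castSucc - z i, by linarith [neg_abs_le (x i.castSucc), hx i.castSucc],
        by linarith [Real.exp_pos (z i - x i.succ)]⟩
  rcases henergy with hz | ⟨u, hu, hle⟩
  · have hE : 0 ≤ todaEnergy x z := Finset.sum_nonneg fun _ _ ↦ by positivity
    calc Real.exp (-todaEnergy x z) ≤ 1 * 1 := by simpa using hE
      _ ≤ k.factorial * Real.exp (k * (‖x‖ - ‖z‖)) := by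
        gcongr
        · exact_mod_cast k.factorial_pos
        · rw [hz, sub_zero]
          exact Real.one_le_exp (by positivity)
  · calc Real.exp (-todaEnergy x z) ≤ Real.exp (-Real.exp u) := by gcongr
      _ ≤ k.factorial * Real.exp (-(k * u)) := exp_neg_exp_le k u
      _ ≤ k.factorial * Real.exp (k * (‖x‖ - ‖z‖)) := by
        rw [← mul_neg]
        gcongr
        linarith

theorem abs_sum_le_card_mul_norm {ι : Type*} [Fintype ι] (x : ι → ℝ) :
    |∑ i, x i| ≤ Fintype.card ι * ‖x‖ :=
  (norm_sum_le _ _).trans ((Pi.sum_norm_apply_le_norm x).trans_eq (nsmul_eq_mul _ _))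

theorem norm_todaKernel_le (k : ℕ) (l : ℂ) (x : Fin (n + 1) → ℝ) (z : Fin n → ℝ) :
    ‖todaKernel l x z‖ ≤ k.factorial *
      Real.exp ((|l.re| * (n + 1) + k) * ‖x‖ + (|l.re| * n - k) * ‖z‖) := by
  have hx := abs_sum_le_card_mul_norm x
  have hz := abs_sum_le_card_mul_norm z
  rw [Fintype.card_fin] at hx hz
  have hsum : l.re * (∑ i, x i - ∑ i, z i) ≤ |l.re| * ((n + 1) * ‖x‖ + n * ‖z‖) := by
    refine (le_abs_self _).trans ?_
    rw [abs_mul]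
    gcongr
    refine (abs_sub _ _).trans (add_le_add ?_ hz)
    exact_mod_cast hx
  rw [todaKernel, Complex.norm_exp, sub_re, re_mul_ofReal, ofReal_re, sub_eq_add_neg, Real.exp_add]
  calc Real.exp (l.re * (∑ i, x i - ∑ i, z i)) * Real.exp (-todaEnergy x z)
      ≤ Real.exp (|l.re| * ((n + 1) * ‖x‖ + n * ‖z‖)) *
        (k.factorial * Real.exp (k * (‖x‖ - ‖z‖))) := by
        gcongr
        exact exp_neg_todaEnergy_le k x z
    _ = _ := by
        rw [mul_left_comm, ← Real.exp_add]
        ring_nf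

theorem integrable_exp_neg_abs : Integrable fun t : ℝ ↦ Real.exp (-|t|) := by
  rw [← integrableOn_univ, ← Set.Iic_union_Ioi (a := (0 : ℝ))]
  refine IntegrableOn.union ?_ ?_
  · refine (integrableOn_exp_Iic 0).congr_fun (fun t ht ↦ ?_) measurableSet_Iic
    rw [abs_of_nonpos (Set.mem_Iic.1 ht), neg_neg]
  · refine (integrableOn_exp_neg_Ioi 0).congr_fun (fun t ht ↦ ?_) measurableSet_Ioi
    rw [abs_of_pos (Set.mem_Ioi.1 ht)]

theorem integrable_exp_neg_card_mul_norm (ι : Type*) [Fintype ι] :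
    Integrable fun z : ι → ℝ ↦ Real.exp (-(Fintype.card ι * ‖z‖)) := by
  refine (Integrable.fintype_prod fun _ ↦ integrable_exp_neg_abs).mono'
    (Continuous.aestronglyMeasurable (by fun_prop)) (.of_forall fun z ↦ ?_)
  rw [Real.norm_of_nonneg (Real.exp_pos _).le, ← Real.exp_sum, Finset.sum_neg_distrib]
  gcongr
  exact (Pi.sum_norm_apply_le_norm z).trans_eq (nsmul_eq_mul _ _)

theorem exists_norm_todaKernel_mul_le (l : ℂ) {f : (Fin n → ℝ) → ℂ} {C c : ℝ}
    (hf : ∀ z, ‖f z‖ ≤ C * Real.exp (c * ‖z‖)) :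
    ∃ C' c' : ℝ, ∀ x z, ‖todaKernel l x z * f z‖ ≤
      C' * Real.exp (c' * ‖x‖) * Real.exp (-(n * ‖z‖)) := by
  obtain ⟨k, hk⟩ := exists_nat_ge (|l.re| * n + c + n)
  refine ⟨k.factorial * C, |l.re| * (n + 1) + k, fun x z ↦ ?_⟩
  have hC : 0 ≤ C := by simpa using (norm_nonneg _).trans (hf 0)
  calc ‖todaKernel l x z * f z‖ = ‖todaKernel l x z‖ * ‖f z‖ := norm_mul _ _
    _ ≤ (k.factorial * Real.exp ((|l.re| * (n + 1) + k) * ‖x‖ + (|l.re| * n - k) * ‖z‖)) *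
        (C * Real.exp (c * ‖z‖)) := by
      gcongr
      · exact norm_todaKernel_le k l x z
      · exact hf z
    _ = k.factorial * C * Real.exp ((|l.re| * (n + 1) + k) * ‖x‖) *
        Real.exp ((|l.re| * n + c - k) * ‖z‖) := by
      rw [mul_mul_mul_comm, mul_assoc _ (Real.exp _), ← Real.exp_add, ← Real.exp_add]
      ring_nf
    _ ≤ _ := by
      rw [← neg_mul]
      gcongr
      linarith

theorem exists_norm_todaPsi_le (n : ℕ) (a : ℕ → ℂ) :
    ∃ C c : ℝ, ∀ x, ‖todaPsi n a x‖ ≤ C * Real.exp (c * ‖x‖) := by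
  induction n generalizing a with
  | zero => exact ⟨1, 0, fun x ↦ by simp [todaPsi]⟩
  | succ n ih =>
    obtain ⟨C, c, h⟩ := ih fun j ↦ a (j + 1)
    obtain ⟨C', c', h'⟩ := exists_norm_todaKernel_mul_le (a 0) h
    have hexp := integrable_exp_neg_card_mul_norm (Fin n)
    rw [Fintype.card_fin] at hexp
    refine ⟨C' * ∫ z : Fin n → ℝ, Real.exp (-(n * ‖z‖)), c', fun x ↦ ?_⟩
    rw [todaPsi, mul_right_comm, ← integral_const_mul]
    exact norm_integral_le_of_norm_le (hexp.const_mul _) (.of_forall (h' x))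

theorem integrable_todaKernel_mul_todaPsi (l : ℂ) (a : ℕ → ℂ) (x : Fin (n + 1) → ℝ) :
    Integrable fun z ↦ todaKernel l x z * todaPsi n a z := by
  obtain ⟨C, c, h⟩ := exists_norm_todaPsi_le n a
  obtain ⟨C', c', h'⟩ := exists_norm_todaKernel_mul_le l h
  have hexp := integrable_exp_neg_card_mul_norm (Fin n)
  rw [Fintype.card_fin] at hexp
  exact (hexp.const_mul _).mono' ((measurable_todaKernel l).of_uncurry_left.mul
    (measurable_todaPsi n a)).aestronglyMeasurable (.of_forall (h' x))

theorem ofReal_norm_todaPsi_le (n : ℕ) (a : ℕ → ℂ) (x : Fin n → ℝ) :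
    (‖todaPsi n a x‖ : ℂ) ≤ todaPsi n (fun j ↦ ((a j).re : ℂ)) x := by
  induction n generalizing a with
  | zero => simp [todaPsi]
  | succ n ih =>
    exact ofReal_norm_integral_le (integrable_todaKernel_mul_todaPsi _ _ x) fun z ↦
      ofReal_norm_mul_le (ofReal_norm_todaKernel _ x z).le (ih _ z)

theorem todaPsi_ofReal_pos (n : ℕ) (a : ℕ → ℝ) (x : Fin n → ℝ) :
    0 < todaPsi n (fun j ↦ (a j : ℂ)) x := by
  induction n generalizing a with
  | zero => simp [todaPsi]
  | succ n ih =>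
    exact integral_pos_of_forall_pos (integrable_todaKernel_mul_todaPsi _ _ x) fun z ↦
      mul_pos (todaKernel_ofReal_pos (a 0) x z) (ih _ z)

end Growth

section Exchange

variable {n : ℕ}

/-- The coefficients of `exp (x i)` in the joint energy of `x` relative to `y` and `z`. -/
def expCoeff (y : Fin (n + 1) → ℝ) (z : Fin n → ℝ) : Fin (n + 1) → ℝ :=
  Fin.snoc (fun i ↦ Real.exp (-y i.castSucc) + Real.exp (-z i)) (Real.exp (-y (Fin.last n)))

/-- The coefficients of `exp (-x i)` in the joint energy of `x` relative to `y` and `z`. -/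
def expNegCoeff (y : Fin (n + 1) → ℝ) (z : Fin n → ℝ) : Fin (n + 1) → ℝ :=
  Fin.cons 0 fun i ↦ Real.exp (y i.castSucc) + Real.exp (z i)

variable (y : Fin (n + 1) → ℝ) (z : Fin n → ℝ)

theorem expCoeff_castSucc (i : Fin n) :
    expCoeff y z i.castSucc = Real.exp (-y i.castSucc) + Real.exp (-z i) :=
  Fin.snoc_castSucc (α := fun _ ↦ ℝ) _ _ i

theorem expCoeff_last : expCoeff y z (Fin.last n) = Real.exp (-y (Fin.last n)) :=
  Fin.snoc_last (α := fun _ ↦ ℝ) _ _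

theorem expNegCoeff_zero : expNegCoeff y z 0 = 0 := rfl

theorem expNegCoeff_succ (i : Fin n) :
    expNegCoeff y z i.succ = Real.exp (y i.castSucc) + Real.exp (z i) := rfl

theorem expCoeff_pos (i : Fin (n + 1)) : 0 < expCoeff y z i := by
  induction i using Fin.lastCases with
  | last => rw [expCoeff_last]; positivity
  | cast i => rw [expCoeff_castSucc]; positivity

theorem expNegCoeff_succ_pos (i : Fin n) : 0 < expNegCoeff y z i.succ := by
  rw [expNegCoeff_succ]
  positivity

theorem expNegCoeff_nonneg (i : Fin (n + 1)) : 0 ≤ expNegCoeff y z i :=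
  i.cases le_rfl fun i ↦ (expNegCoeff_succ_pos y z i).le

theorem log_expNegCoeff_succ (i : Fin n) :
    Real.log (expNegCoeff y z i.succ) =
      y i.castSucc + z i + Real.log (expCoeff y z i.castSucc) := by
  rw [expNegCoeff_succ, expCoeff_castSucc, ← Real.log_exp (y i.castSucc + z i),
    ← Real.log_mul (by positivity) (by positivity), mul_add, ← Real.exp_add, ← Real.exp_add,
    add_comm (Real.exp (y i.castSucc))]
  ring_nf

theorem sum_log_expNegCoeff_sub_log_expCoeff :
    ∑ i : Fin n, (Real.log (expNegCoeff y z i.succ) - Real.log (expCoeff y z i.succ)) =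
      ∑ i, y i + ∑ i, z i + Real.log (expCoeff y z 0) := by
  have htelescope := (Fin.sum_univ_succ fun i ↦ Real.log (expCoeff y z i)).symm.trans
    (Fin.sum_univ_castSucc fun i ↦ Real.log (expCoeff y z i))
  rw [expCoeff_last, Real.log_exp] at htelescope
  simp only [log_expNegCoeff_succ, Finset.sum_sub_distrib, Finset.sum_add_distrib,
    Fin.sum_univ_castSucc y]
  linarith

theorem baxterEnergy_add_todaEnergy (x : Fin (n + 1) → ℝ) :
    baxterEnergy x y + todaEnergy x z =
      ∑ i, (expCoeff y z i * Real.exp (x i) + expNegCoeff y z i * Real.exp (-x i)) := by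
  rw [Finset.sum_add_distrib, Fin.sum_univ_castSucc (fun i ↦ expCoeff y z i * _),
    Fin.sum_univ_succ (fun i ↦ expNegCoeff y z i * _)]
  simp only [baxterEnergy, todaEnergy, Fin.init, expCoeff_castSucc, expCoeff_last,
    expNegCoeff_zero, expNegCoeff_succ, sub_eq_add_neg, Real.exp_add, add_mul,
    Finset.sum_add_distrib, mul_comm (Real.exp (-_))]
  ring

theorem todaEnergy_add_baxterEnergy (w : Fin n → ℝ) :
    todaEnergy y w + baxterEnergy z w =
      ∑ i, (expCoeff y z i.succ * Real.exp (w i) + expNegCoeff y z i.succ * Real.exp (-w i)) := by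
  cases n with
  | zero => simp [todaEnergy, baxterEnergy]
  | succ n =>
    have hcoeff (i : Fin n) : expCoeff y z i.castSucc.succ =
        Real.exp (-y i.castSucc.succ) + Real.exp (-z i.succ) := by
      rw [Fin.succ_castSucc, expCoeff_castSucc]
    simp only [baxterEnergy, todaEnergy, Fin.init, Fin.sum_univ_castSucc (n := n), Fin.succ_last,
      hcoeff, expCoeff_last, expNegCoeff_succ, sub_eq_add_neg, Real.exp_add, add_mul,
      Finset.sum_add_distrib, mul_comm (Real.exp (-_))]
    ring

theorem prod_besselIntegrand {ι : Type*} [Fintype ι] (l : ℂ) (A B x : ι → ℝ) :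
    ∏ i, besselIntegrand l (A i) (B i) (x i) = cexp (l * (∑ i, x i : ℝ) -
      (∑ i, (A i * Real.exp (x i) + B i * Real.exp (-x i)) : ℝ)) := by
  simp only [besselIntegrand]
  rw [← Complex.exp_sum, Finset.sum_sub_distrib, ← Finset.mul_sum, ofReal_sum, ofReal_sum]

theorem baxterKernel_mul_todaKernel (l m : ℂ) (x : Fin (n + 1) → ℝ) :
    baxterKernel m x y * todaKernel l x z =
      cexp (-(m * (∑ i, y i : ℝ) + l * (∑ i, z i : ℝ))) *
        ∏ i, besselIntegrand (m + l) (expCoeff y z i) (expNegCoeff y z i) (x i) := by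
  rw [prod_besselIntegrand, ← baxterEnergy_add_todaEnergy, baxterKernel, todaKernel,
    ← Complex.exp_add, ← Complex.exp_add]
  push_cast
  ring_nf

theorem todaKernel_mul_baxterKernel (l m : ℂ) (w : Fin n → ℝ) :
    todaKernel l y w * baxterKernel m z w =
      cexp (l * (∑ i, y i : ℝ) + m * (∑ i, z i : ℝ)) *
        ∏ i : Fin n, besselIntegrand (-(m + l)) (expCoeff y z i.succ) (expNegCoeff y z i.succ)
          (w i) := by
  rw [prod_besselIntegrand, ← todaEnergy_add_baxterEnergy, baxterKernel, todaKernel,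
    ← Complex.exp_add, ← Complex.exp_add]
  push_cast
  ring_nf

variable {l m : ℂ}

theorem integrable_baxterKernel_mul_todaKernel (h : 0 < (m + l).re) :
    Integrable fun x ↦ baxterKernel m x y * todaKernel l x z := by
  simp only [baxterKernel_mul_todaKernel]
  exact (Integrable.fintype_prod fun i ↦ integrable_besselIntegrand h (expCoeff_pos y z i)
    (expNegCoeff_nonneg y z i)).const_mul _

theorem integral_prod_besselIntegrand (h : 0 < (m + l).re) :
    ∫ x : Fin (n + 1) → ℝ, ∏ i, besselIntegrand (m + l) (expCoeff y z i) (expNegCoeff y z i) (x i) =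
      cexp ((m + l) * (∑ i, y i + ∑ i, z i : ℝ)) * Complex.Gamma (m + l) *
        ∫ w : Fin n → ℝ, ∏ i, besselIntegrand (-(m + l)) (expCoeff y z i.succ)
          (expNegCoeff y z i.succ) (w i) := by
  rw [integral_fintype_prod_volume_eq_prod, integral_fintype_prod_volume_eq_prod,
    Fin.prod_univ_succ, expNegCoeff_zero, integral_besselIntegrand_zero h (expCoeff_pos y z 0)]
  simp only [integral_besselIntegrand_eq_mul_neg (m + l) (expCoeff_pos y z _)
    (expNegCoeff_succ_pos y z _)]
  rw [Finset.prod_mul_distrib, ← Complex.exp_sum, ← Finset.mul_sum, ← ofReal_sum,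
    sum_log_expNegCoeff_sub_log_expCoeff, ← mul_assoc, mul_right_comm (cexp _), ← Complex.exp_add]
  push_cast
  ring_nf

/-- Both sides factor into one-dimensional Bessel integrals, except that the first factor on the
left is a Gamma integral; the remaining factors match under `K_ν = K_{-ν}`. -/
theorem integral_baxterKernel_mul_todaKernel (h : 0 < (m + l).re) :
    ∫ x, baxterKernel m x y * todaKernel l x z =
      Complex.Gamma (m + l) * ∫ w, todaKernel l y w * baxterKernel m z w := by
  simp only [baxterKernel_mul_todaKernel, todaKernel_mul_baxterKernel, integral_const_mul]
  rw [integral_prod_besselIntegrand y z h, ← mul_assoc, ← mul_assoc, ← Complex.exp_add,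
    mul_left_comm, ← mul_assoc]
  push_cast
  ring_nf

end Exchange

section Eigenfunction

variable {n : ℕ} {l m c C : ℂ} {f F g G : (Fin n → ℝ) → ℂ}

/-- `f` is an eigenfunction, with eigenvalue `c`, of the Baxter operator with parameter `m`. -/
def IsBaxterEigenfunction (m : ℂ) (f : (Fin n → ℝ) → ℂ) (c : ℂ) : Prop :=
  ∀ y, ∫ x, baxterKernel m x y * f x = c * f y

theorem IsBaxterEigenfunction.integrable (hF : IsBaxterEigenfunction m F C) (hC : C ≠ 0)
    (hpos : ∀ x, 0 < F x) (y : Fin n → ℝ) : Integrable fun x ↦ baxterKernel m x y * F x :=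
  Integrable.of_integral_ne_zero <| (hF y).symm ▸ mul_ne_zero hC (hpos y).ne'

theorem IsBaxterEigenfunction.integral_mul_integral (hf : IsBaxterEigenfunction m f c)
    (hF : IsBaxterEigenfunction m.re F C) (hC : C ≠ 0) (hpos : ∀ x, 0 < F x)
    (hf_meas : Measurable f) (hg_meas : Measurable g) (hfF : ∀ x, (‖f x‖ : ℂ) ≤ F x)
    (hgG : ∀ x, (‖g x‖ : ℂ) ≤ G x) (hFG : Integrable fun x ↦ F x * G x) :
    ∫ x, f x * ∫ y, baxterKernel m x y * g y = c * ∫ x, f x * g x := by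
  have hFG' : Integrable fun y ↦ (∫ x, baxterKernel m.re x y * F x) * G y := by
    simpa only [hF _, mul_assoc] using hFG.const_mul C
  rw [integral_mul_integral_swap_of_dominated (measurable_baxterKernel m) hf_meas hg_meas
    (fun x y ↦ (ofReal_norm_baxterKernel m x y).le) hfF hgG (hF.integrable hC hpos) hFG']
  simp only [hf _, mul_assoc, integral_const_mul]

theorem prod_Gamma_add_ne_zero {a : ℕ → ℂ} (h : ∀ j < n, 0 < (m + a j).re) :
    ∏ j ∈ Finset.range n, Complex.Gamma (m + a j) ≠ 0 :=
  Finset.prod_ne_zero_iff.2 fun j hj ↦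
    Complex.Gamma_ne_zero_of_re_pos (h j (Finset.mem_range.1 hj))

theorem integral_todaPsi_mul_integral_baxterKernel_mul {a : ℕ → ℂ}
    (heigen : ∀ (a : ℕ → ℂ) (m : ℂ), (∀ j < n, 0 < (m + a j).re) →
      IsBaxterEigenfunction m (todaPsi n a) (∏ j ∈ Finset.range n, Complex.Gamma (m + a j)))
    (h : ∀ j < n, 0 < (m + a j).re) (hg_meas : Measurable g) (hgG : ∀ x, (‖g x‖ : ℂ) ≤ G x)
    (hG : Integrable fun x ↦ todaPsi n (fun j ↦ ((a j).re : ℂ)) x * G x) :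
    ∫ x, todaPsi n a x * ∫ y, baxterKernel m x y * g y =
      (∏ j ∈ Finset.range n, Complex.Gamma (m + a j)) * ∫ x, todaPsi n a x * g x := by
  have h' : ∀ j < n, 0 < ((m.re : ℂ) + (a j).re).re := by simpa using h
  exact (heigen a m h).integral_mul_integral (heigen _ _ h') (prod_Gamma_add_ne_zero h')
    (todaPsi_ofReal_pos n _) (measurable_todaPsi n a) hg_meas (ofReal_norm_todaPsi_le n a) hgG hG

theorem integral_integral_todaKernel_mul_baxterKernel_mul_todaPsi
    (heigen : ∀ (a : ℕ → ℂ) (m : ℂ), (∀ j < n, 0 < (m + a j).re) →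
      IsBaxterEigenfunction m (todaPsi n a) (∏ j ∈ Finset.range n, Complex.Gamma (m + a j)))
    {a : ℕ → ℂ} (h : ∀ j < n + 1, 0 < (m + a j).re) (y : Fin (n + 1) → ℝ) :
    ∫ z, (∫ x, todaKernel (a 0) x z * baxterKernel m x y) * todaPsi n (fun j ↦ a (j + 1)) z =
      (∏ j ∈ Finset.range (n + 1), Complex.Gamma (m + a j)) * todaPsi (n + 1) a y := by
  have hexchange (z : Fin n → ℝ) :
      (∫ x, todaKernel (a 0) x z * baxterKernel m x y) * todaPsi n (fun j ↦ a (j + 1)) z =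
        Complex.Gamma (m + a 0) * (todaPsi n (fun j ↦ a (j + 1)) z *
          ∫ w, baxterKernel m z w * todaKernel (a 0) y w) := by
    simp only [mul_comm (todaKernel (a 0) _ _)]
    rw [integral_baxterKernel_mul_todaKernel y z (h 0 n.succ_pos)]
    simp only [mul_comm (todaKernel (a 0) _ _)]
    ring
  have hint : Integrable fun w ↦
      todaPsi n (fun j ↦ ((a (j + 1)).re : ℂ)) w * todaKernel (a 0).re y w := by
    simpa only [mul_comm] using
      integrable_todaKernel_mul_todaPsi (a 0).re (fun j ↦ ((a (j + 1)).re : ℂ)) y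
  have hswap := integral_todaPsi_mul_integral_baxterKernel_mul heigen (a := fun j ↦ a (j + 1))
    (fun j hj ↦ h (j + 1) (Nat.succ_lt_succ hj)) (measurable_todaKernel (a 0)).of_uncurry_left
    (fun w ↦ (ofReal_norm_todaKernel (a 0) y w).le) hint
  rw [integral_congr_ae (.of_forall hexchange), integral_const_mul, hswap,
    Finset.prod_range_succ', todaPsi]
  simp only [mul_comm (todaPsi n _ _)]
  ring

theorem isBaxterEigenfunction_todaPsi (n : ℕ) (a : ℕ → ℂ) (m : ℂ)
    (h : ∀ j < n, 0 < (m + a j).re) :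
    IsBaxterEigenfunction m (todaPsi n a) (∏ j ∈ Finset.range n, Complex.Gamma (m + a j)) := by
  induction n generalizing a m with
  | zero =>
    intro y
    simp [baxterKernel, baxterEnergy, todaPsi, volume_pi, Measure.real]
  | succ n ih =>
    intro y
    have h' : ∀ j < n + 1, 0 < ((m.re : ℂ) + (a j).re).re := by simpa using h
    have hreal := integral_integral_todaKernel_mul_baxterKernel_mul_todaPsi ih h' y
    have hne := mul_ne_zero (prod_Gamma_add_ne_zero h')
      (todaPsi_ofReal_pos (n + 1) (fun j ↦ (a j).re) y).ne'
    rw [← integral_integral_todaKernel_mul_baxterKernel_mul_todaPsi ih h y,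
      ← integral_mul_integral_swap_of_dominated (measurable_todaKernel (a 0))
        (measurable_baxterKernel m).of_uncurry_right (measurable_todaPsi n _)
        (fun x z ↦ (ofReal_norm_todaKernel (a 0) x z).le)
        (fun x ↦ (ofReal_norm_baxterKernel m x y).le) (ofReal_norm_todaPsi_le n _) (fun z ↦ ?_)
        (Integrable.of_integral_ne_zero (hreal.trans_ne hne))]
    · rfl
    · simpa only [mul_comm] using integrable_baxterKernel_mul_todaKernel y z (h' 0 n.succ_pos)

end Eigenfunction

section ProductIntegrals

variable {n : ℕ} {a b : ℕ → ℂ}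

theorem integral_todaPsi_mul_boundaryWeight_mul_todaPsi_eq_mul (h : ∀ k < n + 1, 0 < (a 0 + b k).re)
    (hint : Integrable fun z : Fin n → ℝ ↦ todaPsi (n + 1) (fun k ↦ ((b k).re : ℂ)) (snocZero z) *
      todaPsi n (fun j ↦ ((a (j + 1)).re : ℂ)) z) :
    ∫ y, todaPsi (n + 1) b y * (boundaryWeight y * todaPsi (n + 1) a y) =
      (∏ k ∈ Finset.range (n + 1), Complex.Gamma (a 0 + b k)) *
        ∫ z, todaPsi (n + 1) b (snocZero z) * todaPsi n (fun j ↦ a (j + 1)) z := by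
  have hkernel (l : ℂ) (b : ℕ → ℂ) (y : Fin (n + 1) → ℝ) (z : Fin n → ℝ) :
      todaKernel l y z * (todaPsi (n + 1) b y * boundaryWeight y) =
        baxterKernel l y (snocZero z) * todaPsi (n + 1) b y := by
    rw [← todaKernel_mul_boundaryWeight, mul_assoc, mul_comm (boundaryWeight y)]
  have h' : ∀ k < n + 1, 0 < (((a 0).re : ℂ) + (b k).re).re := by simpa using h
  have hpsi := isBaxterEigenfunction_todaPsi (n + 1) b (a 0) h
  have hpsi' := isBaxterEigenfunction_todaPsi (n + 1) (fun k ↦ ((b k).re : ℂ)) (a 0).re h'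
  have hswap := integral_mul_integral_swap_of_dominated (μ := volume) (ν := volume)
    (measurable_todaKernel (a 0)) ((measurable_todaPsi (n + 1) b).mul measurable_boundaryWeight)
    (measurable_todaPsi n fun j ↦ a (j + 1)) (fun y z ↦ (ofReal_norm_todaKernel (a 0) y z).le)
    (fun y ↦ ofReal_norm_mul_le (ofReal_norm_todaPsi_le (n + 1) b y)
      (ofReal_norm_boundaryWeight y).le) (ofReal_norm_todaPsi_le n _)
  simp only [Pi.mul_apply, hkernel, hpsi _, hpsi' _, mul_assoc, integral_const_mul] at hswap
  exact hswap (fun z ↦ hpsi'.integrable (prod_Gamma_add_ne_zero h') (todaPsi_ofReal_pos _ _) _)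
    (hint.const_mul _)

theorem integral_todaPsi_snocZero_mul_todaPsi_eq_mul (h : ∀ k < n + 1, 0 < (a 0 + b k).re)
    (hint : Integrable fun y : Fin (n + 1) → ℝ ↦ todaPsi (n + 1) (fun k ↦ ((b k).re : ℂ)) y *
      (boundaryWeight y * todaPsi (n + 1) (fun j ↦ ((a (j + 1)).re : ℂ)) y)) :
    ∫ x, todaPsi (n + 2) a (snocZero x) * todaPsi (n + 1) b x =
      (∏ k ∈ Finset.range (n + 1), Complex.Gamma (a 0 + b k)) *
        ∫ y, todaPsi (n + 1) b y * (boundaryWeight y * todaPsi (n + 1) (fun j ↦ a (j + 1)) y) := by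
  rw [← integral_todaPsi_mul_integral_baxterKernel_mul (isBaxterEigenfunction_todaPsi (n + 1)) h
    (g := fun y ↦ boundaryWeight y * todaPsi (n + 1) (fun j ↦ a (j + 1)) y)
    (measurable_boundaryWeight.mul (measurable_todaPsi _ _)) (fun y ↦ ofReal_norm_mul_le
      (ofReal_norm_boundaryWeight y).le (ofReal_norm_todaPsi_le _ _ y)) hint]
  simp only [← mul_assoc, ← todaKernel_snocZero, mul_comm (todaPsi (n + 1) b _)]
  rfl

theorem prod_prod_Gamma_add_ne_zero {p q : ℕ} (h : ∀ j < p, ∀ k < q, 0 < (a j + b k).re) :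
    ∏ j ∈ Finset.range p, ∏ k ∈ Finset.range q, Complex.Gamma (a j + b k) ≠ 0 :=
  Finset.prod_ne_zero_iff.2 fun j hj ↦ prod_Gamma_add_ne_zero (h j (Finset.mem_range.1 hj))

theorem prod_Gamma_mul_prod_prod_Gamma_succ (p q : ℕ) (a b : ℕ → ℂ) :
    (∏ k ∈ Finset.range q, Complex.Gamma (a 0 + b k)) *
      ∏ k ∈ Finset.range q, ∏ j ∈ Finset.range p, Complex.Gamma (b k + a (j + 1)) =
      ∏ j ∈ Finset.range (p + 1), ∏ k ∈ Finset.range q, Complex.Gamma (a j + b k) := by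
  rw [Finset.prod_range_succ', mul_comm, Finset.prod_comm]
  simp only [add_comm (b _)]

theorem integral_todaPsi_mul_boundaryWeight_mul_todaPsi
    (hind : ∀ a b : ℕ → ℂ, (∀ j < n + 1, ∀ k < n, 0 < (a j + b k).re) →
      ∫ x, todaPsi (n + 1) a (snocZero x) * todaPsi n b x =
        ∏ j ∈ Finset.range (n + 1), ∏ k ∈ Finset.range n, Complex.Gamma (a j + b k))
    (h : ∀ j < n + 1, ∀ k < n + 1, 0 < (a j + b k).re) :
    ∫ y, todaPsi (n + 1) b y * (boundaryWeight y * todaPsi (n + 1) a y) =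
      ∏ j ∈ Finset.range (n + 1), ∏ k ∈ Finset.range (n + 1), Complex.Gamma (a j + b k) := by
  have hsucc : ∀ k < n + 1, ∀ j < n, 0 < (b k + a (j + 1)).re := fun k hk j hj ↦ by
    simpa only [add_comm] using h (j + 1) (by lia) k hk
  have hsucc' : ∀ k < n + 1, ∀ j < n, 0 < (((b k).re : ℂ) + (a (j + 1)).re).re := by
    simpa using hsucc
  rw [integral_todaPsi_mul_boundaryWeight_mul_todaPsi_eq_mul (h 0 n.succ_pos)
    (Integrable.of_integral_ne_zero <|
      (hind _ _ hsucc').trans_ne (prod_prod_Gamma_add_ne_zero hsucc')), hind _ _ hsucc,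
    prod_Gamma_mul_prod_prod_Gamma_succ]

theorem integral_todaPsi_snocZero_mul_todaPsi (n : ℕ) (a b : ℕ → ℂ)
    (h : ∀ j < n + 1, ∀ k < n, 0 < (a j + b k).re) :
    ∫ x, todaPsi (n + 1) a (snocZero x) * todaPsi n b x =
      ∏ j ∈ Finset.range (n + 1), ∏ k ∈ Finset.range n, Complex.Gamma (a j + b k) := by
  induction n generalizing a b with
  | zero =>
    have hzero (x : Fin 0 → ℝ) : snocZero x 0 = 0 := snocZero_last x
    simp [todaPsi, todaKernel, todaEnergy, hzero, volume_pi, Measure.real]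
  | succ n ih =>
    have hsucc' : ∀ j < n + 1, ∀ k < n + 1, 0 < (((a (j + 1)).re : ℂ) + (b k).re).re :=
      fun j hj k hk ↦ by simpa using h (j + 1) (by lia) k hk
    rw [integral_todaPsi_snocZero_mul_todaPsi_eq_mul (h 0 (by lia))
      (Integrable.of_integral_ne_zero <| (integral_todaPsi_mul_boundaryWeight_mul_todaPsi ih
        hsucc').trans_ne (prod_prod_Gamma_add_ne_zero hsucc')),
      integral_todaPsi_mul_boundaryWeight_mul_todaPsi ih fun j hj ↦ h (j + 1) (by lia),
      Finset.prod_range_succ' _ (n + 1), mul_comm]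

end ProductIntegrals

section Extension

variable {n : ℕ}

theorem extR_exp (u : Fin n → ℝ) (j : ℕ) :
    extR (fun i ↦ Real.exp (u i)) j = Real.exp (extR0 u j) := by
  unfold extR extR0
  split_ifs <;> simp

theorem extR0_val (x : Fin n → ℝ) (i : Fin n) : extR0 x i = x i := by
  simp [extR0]

theorem extR0_val_succ (x : Fin n → ℝ) (i : Fin (n + 1)) : extR0 x i = snocZero x i := by
  refine Fin.lastCases ?_ (fun i ↦ ?_) i <;> simp [extR0]

end Extension

section PositiveOrthant

variable {k : ℕ}

theorem image_exp_univ (k : ℕ) :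
    (fun (u : Fin k → ℝ) i ↦ Real.exp (u i)) '' Set.univ = posSet k := by
  rw [Set.image_univ]
  refine Set.Subset.antisymm (Set.range_subset_iff.2 fun u j ↦ Real.exp_pos _) fun t ht ↦ ?_
  exact ⟨fun i ↦ Real.log (t i), funext fun i ↦ Real.exp_log (ht i)⟩

theorem det_pi_smul_proj (c : Fin k → ℝ) :
    (ContinuousLinearMap.pi fun i ↦ c i • ContinuousLinearMap.proj (R := ℝ)
      (φ := fun _ : Fin k ↦ ℝ) i).det = ∏ i, c i := by
  rw [ContinuousLinearMap.det, ← Matrix.det_diagonal, ← LinearMap.det_toLin']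
  congr 1
  ext v i
  simp [Matrix.mulVec_diagonal]

theorem setIntegral_posSet_mul_inv_prod (f : (Fin k → ℝ) → ℂ) :
    ∫ t in posSet k, f t * (∏ j ∈ Finset.range k, ((extR t j : ℝ) : ℂ))⁻¹ =
      ∫ u : Fin k → ℝ, f fun i ↦ Real.exp (u i) := by
  have hderiv (u : Fin k → ℝ) : HasFDerivAt (fun (u : Fin k → ℝ) i ↦ Real.exp (u i))
      (ContinuousLinearMap.pi fun i ↦ Real.exp (u i) • ContinuousLinearMap.proj i) u :=
    hasFDerivAt_pi.2 fun i ↦ (ContinuousLinearMap.proj (R := ℝ)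
      (φ := fun _ : Fin k ↦ ℝ) i).hasFDerivAt.exp
  have hinj : Function.Injective fun (u : Fin k → ℝ) i ↦ Real.exp (u i) :=
    Real.exp_injective.comp_left
  rw [← image_exp_univ, integral_image_eq_integral_abs_det_fderiv_smul volume .univ
    (fun u _ ↦ (hderiv u).hasFDerivWithinAt) hinj.injOn, setIntegral_univ]
  refine integral_congr_ae (.of_forall fun u ↦ ?_)
  have hprod : (0 : ℝ) < ∏ i, Real.exp (u i) := Finset.prod_pos fun _ _ ↦ Real.exp_pos _
  have hne : ((∏ i, Real.exp (u i) : ℝ) : ℂ) ≠ 0 := ofReal_ne_zero.2 hprod.ne'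
  simp only [det_pi_smul_proj, abs_of_pos hprod, Finset.prod_range, extR_exp, extR0_val,
    ← ofReal_prod, real_smul]
  rw [mul_left_comm, mul_inv_cancel₀ hne, mul_one]

end PositiveOrthant

section LinearChange

/-- The linear part `x ↦ ((x_i - x_{i+1}) / 2)_i`, with `x_{n+1} = 0`, of the passage from Toda
coordinates to the logarithms of the torus coordinates. -/
def halfDiff (n : ℕ) : (Fin n → ℝ) →ₗ[ℝ] (Fin n → ℝ) where
  toFun x i := (extR0 x i - extR0 x (i + 1)) / 2
  map_add' x y := by
    ext i
    simp only [extR0, Pi.add_apply]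
    split_ifs <;> ring
  map_smul' c x := by
    ext i
    simp only [extR0, Pi.smul_apply, smul_eq_mul, RingHom.id_apply]
    split_ifs <;> ring

theorem det_halfDiff (n : ℕ) : LinearMap.det (halfDiff n) = (2 ^ n)⁻¹ := by
  have hentry (i j : Fin n) : LinearMap.toMatrix' (halfDiff n) i j =
      (extR0 (Pi.single j 1) i - extR0 (Pi.single j 1) (i + 1)) / 2 := rfl
  rw [← LinearMap.det_toMatrix', Matrix.det_of_isUpperTriangular]
  · have hdiag (i : Fin n) : LinearMap.toMatrix' (halfDiff n) i i = 2⁻¹ := by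
      have hne (hi : (i : ℕ) + 1 < n) : (⟨i + 1, hi⟩ : Fin n) ≠ i := by simp [Fin.ext_iff]
      rw [hentry]
      simp +contextual [extR0, hne]
    simp [hdiag]
  · intro i j hji
    have hji : j < i := hji
    rw [hentry]
    have hne (hi : (i : ℕ) + 1 < n) : (⟨i + 1, hi⟩ : Fin n) ≠ j := by
      intro h
      rw [← h] at hji
      exact absurd hji (by simp [Fin.lt_def])
    simp +contextual [extR0, hne, hji.ne']

theorem integral_comp_halfDiff_sub (n : ℕ) (c : Fin n → ℝ) (f : (Fin n → ℝ) → ℂ) :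
    ∫ x, f (halfDiff n x - c) = 2 ^ n * ∫ u, f u := by
  have hdet : LinearMap.det (halfDiff n) ≠ 0 := by
    rw [det_halfDiff]
    positivity
  have hemb : MeasurableEmbedding (halfDiff n) :=
    (halfDiff n).continuous_of_finiteDimensional.measurableEmbedding
      (LinearMap.equivOfDetNeZero _ hdet).injective
  rw [← hemb.integral_map (fun u ↦ f (u - c)), Measure.map_linearMap_addHaar_eq_smul_addHaar _ hdet,
    integral_smul_measure, integral_sub_right_eq_self, det_halfDiff, inv_inv,
    abs_of_pos (by positivity), ENNReal.toReal_ofReal (by positivity), real_smul]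
  push_cast
  rfl

end LinearChange

section SummationByParts

variable {R : Type*} [CommRing R]

theorem sum_range_succ_mul_sub_succ (n : ℕ) (x : ℕ → R) :
    ∑ j ∈ Finset.range n, (j + 1) * (x j - x (j + 1)) = ∑ j ∈ Finset.range n, x j - n * x n := by
  induction n with
  | zero => simp
  | succ n ih =>
    rw [Finset.sum_range_succ, Finset.sum_range_succ, ih]
    push_cast
    ring

theorem sum_range_sub_mul_sub_succ (n : ℕ) (x : ℕ → R) :
    ∑ j ∈ Finset.range n, (n - j) * (x j - x (j + 1)) =
      n * x 0 - ∑ j ∈ Finset.range n, x (j + 1) := by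
  have hsplit : ∑ j ∈ Finset.range n, (n - j) * (x j - x (j + 1)) =
      (n + 1) * ∑ j ∈ Finset.range n, (x j - x (j + 1)) -
        ∑ j ∈ Finset.range n, (j + 1) * (x j - x (j + 1)) := by
    rw [Finset.mul_sum, ← Finset.sum_sub_distrib]
    exact Finset.sum_congr rfl fun j _ ↦ by ring
  have hshift := (Finset.sum_range_succ x n).symm.trans (Finset.sum_range_succ' x n)
  rw [hsplit, Finset.sum_range_sub', sum_range_succ_mul_sub_succ]
  linear_combination -hshift

end SummationByParts

section Whittaker

theorem todaPsi_add_const (n : ℕ) (a : ℕ → ℂ) (c : ℂ) (x : Fin n → ℝ) :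
    todaPsi n (fun j ↦ a j + c) x = cexp (c * (∑ i, x i : ℝ)) * todaPsi n a x := by
  induction n generalizing a with
  | zero => simp [todaPsi]
  | succ n ih =>
    have hkernel (z : Fin n → ℝ) : todaKernel (a 0 + c) x z * cexp (c * (∑ i, z i : ℝ)) =
        cexp (c * (∑ i, x i : ℝ)) * todaKernel (a 0) x z := by
      rw [todaKernel, todaKernel, ← Complex.exp_add, ← Complex.exp_add]
      push_cast
      ring_nf
    simp only [todaPsi, ih fun j ↦ a (j + 1), ← mul_assoc, hkernel]
    simp only [mul_assoc, integral_const_mul]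

theorem todaPsi_one (a : ℕ → ℂ) (x : Fin 1 → ℝ) : todaPsi 1 a x = cexp (a 0 * x 0) := by
  simp [todaPsi, todaKernel, todaEnergy, volume_pi, Measure.real]

theorem sumA_tildeA (n : ℕ) (a : ℕ → ℂ) : sumA (n + 1) (tildeA (n + 2) a) = sumA (n + 2) a := by
  have hn : (n : ℂ) + 1 ≠ 0 := n.cast_add_one_ne_zero
  rw [sumA, sumA, Finset.sum_range_succ' a]
  simp only [tildeA, Finset.sum_add_distrib, Finset.sum_const, Finset.card_range, nsmul_eq_mul]
  push_cast
  rw [add_sub_assoc, show (2 : ℂ) - 1 = 1 by norm_num, mul_div_cancel₀ _ hn]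

theorem tildeA_div_two (n : ℕ) (a : ℕ → ℂ) (j : ℕ) :
    tildeA (n + 1) a j / 2 = a (j + 1) / 2 + a 0 / n / 2 := by
  rw [tildeA, Nat.cast_succ, add_sub_cancel_right, add_div]

theorem cexp_mul_cpow_mul_cpow_eq_cexp {x x' y z t : ℝ}
    (hy : Real.pi * y = Real.exp ((x - x') / 2)) (ht : t = Real.exp (x' - z)) (A B : ℂ) :
    cexp ((-(Real.pi * y) ^ 2 * t - 1 / t : ℝ) : ℂ) * ((Real.pi * y : ℝ) : ℂ) ^ A * (t : ℂ) ^ B =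
      cexp ((x - x') / 2 * A + (x' - z) * B - (Real.exp (x - z) + Real.exp (z - x') : ℝ)) := by
  have hexp : -(Real.pi * y) ^ 2 * t - 1 / t = -(Real.exp (x - z) + Real.exp (z - x')) := by
    rw [hy, ht, one_div, ← Real.exp_neg, ← Real.exp_nat_mul, neg_mul, ← Real.exp_add]
    push_cast
    ring_nf
  rw [hexp, hy, ht, ofReal_exp_cpow, ofReal_exp_cpow, ← Complex.exp_add, ← Complex.exp_add]
  push_cast
  ring_nf

theorem prod_cexp_mul_cpow_mul_cpow_eq_todaKernel {N : ℕ} (hN : N ≠ 0) {x y t : ℕ → ℝ}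
    {z : Fin N → ℝ} (hy : ∀ j < N, Real.pi * y j = Real.exp ((x j - x (j + 1)) / 2))
    (ht : ∀ i : Fin N, t i = Real.exp (x (i + 1) - z i)) (w : ℂ) :
    (∏ j ∈ Finset.range N, cexp ((-(Real.pi * y j) ^ 2 * t j - 1 / t j : ℝ) : ℂ) *
        ((Real.pi * y j : ℝ) : ℂ) ^ ((((N - j : ℕ) : ℂ) * w) / N) *
        (t j : ℂ) ^ ((((N + 1 : ℕ) : ℂ) * w) / (2 * N))) * cexp (w / N / 2 * (∑ i, z i : ℝ)) =
      todaKernel (w / 2) (fun i : Fin (N + 1) ↦ x i) z := by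
  have hN : (N : ℂ) ≠ 0 := Nat.cast_ne_zero.2 hN
  have hparts := sum_range_sub_mul_sub_succ N fun j ↦ (x j : ℂ)
  rw [Finset.sum_range, Finset.sum_range] at hparts
  have hsum : ∑ i : Fin (N + 1), (x i : ℂ) = x 0 + ∑ i : Fin N, (x (i + 1) : ℂ) := by
    simp [Fin.sum_univ_succ]
  have hterm (i : Fin N) : ((x i : ℂ) - x (i + 1)) / 2 * (((N - i : ℕ) : ℂ) * w / N) +
      (x (i + 1) - z i) * (((N + 1 : ℕ) : ℂ) * w / (2 * N)) =
        ((N - i) * (x i - x (i + 1)) + (N + 1) * (x (i + 1) - z i)) * (w / (2 * N)) := by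
    rw [Nat.cast_sub i.2.le]
    push_cast
    field_simp
  rw [Finset.prod_range, Finset.prod_congr rfl fun (i : Fin N) _ ↦
    cexp_mul_cpow_mul_cpow_eq_cexp (hy i i.2) (ht i) _ _, ← Complex.exp_sum, ← Complex.exp_add,
    todaKernel, Finset.sum_sub_distrib, Finset.sum_congr rfl fun i _ ↦ hterm i, ← Finset.sum_mul,
    Finset.sum_add_distrib, hparts, ← Finset.mul_sum, Finset.sum_sub_distrib]
  simp only [todaEnergy, ofReal_sum, ofReal_sub, hsum, Fin.val_castSucc, Fin.val_succ]
  congr 1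
  field_simp
  ring

theorem eq_exp_sub_log_pi {y r : ℝ} (h : Real.pi * y = Real.exp r) :
    y = Real.exp (r - Real.log Real.pi) := by
  rw [Real.exp_sub, Real.exp_log Real.pi_pos, ← h, mul_div_cancel_left₀ _ Real.pi_ne_zero]

theorem besselK_eq_integral_besselIntegrand (ν : ℂ) (y : ℝ) :
    BesselK ν (2 * y) = 1 / 2 * ∫ v, besselIntegrand ν y y v := by
  rw [BesselK, integral_Ioi_zero_eq_integral_exp_smul]
  congr 2 with v
  have hne : ((Real.exp v : ℝ) : ℂ) ≠ 0 := ofReal_ne_zero.2 (Real.exp_pos v).ne'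
  rw [ofReal_exp_cpow, real_smul, mul_div_cancel₀ _ hne, ← Complex.exp_add, besselIntegrand,
    one_div, ← ofReal_inv, ← Real.exp_neg]
  push_cast
  ring_nf

theorem integral_fin_one (f : (Fin 1 → ℝ) → ℂ) : ∫ z, f z = ∫ v, f fun _ ↦ v :=
  ((volume_preserving_funUnique (Fin 1) ℝ).symm.integral_comp
    (MeasurableEquiv.measurableEmbedding _) f).symm

theorem whittAr_two_eq_todaPsi {a : ℕ → ℂ} {x y : ℕ → ℝ}
    (h : Real.pi * y 0 = Real.exp ((x 0 - x 1) / 2)) :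
    WhittAr 2 a y = cexp (-((Real.log Real.pi + x 1) / 2) * sumA 2 a) *
      todaPsi 2 (fun j ↦ a j / 2) fun i ↦ x i := by
  have hsum : ∑ i : Fin 2, x i = x 0 + x 1 := Fin.sum_univ_two _
  rw [WhittAr, mul_assoc 2 Real.pi, besselK_eq_integral_besselIntegrand, todaPsi,
    integral_fin_one, ← integral_sub_left_eq_self _ volume ((x 0 + x 1) / 2), ← mul_assoc,
    ← integral_const_mul, ← integral_const_mul, h, eq_exp_sub_log_pi h, ofReal_exp_cpow]
  refine integral_congr_ae (.of_forall fun z ↦ ?_)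
  simp only [todaPsi_one, todaKernel, todaEnergy, besselIntegrand, ← Real.exp_add, hsum,
    Fin.sum_univ_one, sumA, Finset.sum_range_succ, Finset.sum_range_zero]
  rw [mul_one_div, mul_div_cancel_left₀ _ two_ne_zero, ← Complex.exp_add, ← Complex.exp_add,
    ← Complex.exp_add]
  simp only [Fin.castSucc_zero, Fin.succ_zero_eq_one, Fin.val_zero, Fin.val_one]
  push_cast
  ring_nf

theorem pi_mul_mul_sqrt_div_eq_exp {x₁ x₂ y z₁ z₂ : ℝ}
    (hy : Real.pi * y = Real.exp ((x₁ - x₂) / 2)) :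
    Real.pi * (y * √(Real.exp (x₂ - z₂) / Real.exp (x₁ - z₁))) = Real.exp ((z₁ - z₂) / 2) := by
  rw [← mul_assoc, hy, ← Real.exp_sub, ← Real.exp_half, ← Real.exp_add]
  ring_nf

/-- The substitution `t_j = exp (x_{j+1} - z_j)` turns the recursion of the Whittaker functions into
that of the Toda functions; `π * y_{j+1} * √(t_{j+1} / t_j)` becomes `exp ((z_j - z_{j+1}) / 2)`. -/
theorem whittAr_succ_eq_todaPsi (n : ℕ) (a : ℕ → ℂ) (x y : ℕ → ℝ)
    (h : ∀ j < n, Real.pi * y j = Real.exp ((x j - x (j + 1)) / 2)) :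
    WhittAr (n + 1) a y = cexp (-((n * Real.log Real.pi + x n) / 2) * sumA (n + 1) a) *
      todaPsi (n + 1) (fun j ↦ a j / 2) fun i ↦ x i := by
  induction n generalizing a x y with
  | zero =>
    rw [WhittAr, todaPsi_one, ← Complex.exp_add, sumA, Finset.sum_range_one, Fin.val_zero,
      Nat.cast_zero, zero_mul, zero_add, neg_mul, mul_comm_div, mul_comm, neg_add_cancel,
      Complex.exp_zero]
  | succ n ih =>
    obtain _ | n := n
    · simpa using whittAr_two_eq_todaPsi (h 0 one_pos)
    rw [WhittAr, setIntegral_posSet_mul_inv_prod, todaPsi, ← integral_const_mul,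
      ← integral_sub_left_eq_self _ volume fun i : Fin (n + 2) ↦ x (i + 1)]
    refine integral_congr_ae (.of_forall fun z ↦ ?_)
    simp only [Pi.sub_apply]
    set t : ℕ → ℝ := extR fun i : Fin (n + 2) ↦ Real.exp (x (i + 1) - z i)
    have ht : ∀ j < n + 2, t j = Real.exp (x (j + 1) - extR0 z j) := fun j hj ↦ by
      simp [t, extR, extR0, hj]
    have hlast : (Real.pi * t (n + 1) : ℝ) =
        Real.exp (Real.log Real.pi + (x (n + 2) - extR0 z (n + 1))) := by
      rw [Real.exp_add, Real.exp_log Real.pi_pos, ht _ (Nat.lt_succ_self _)]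
    have hy : ∀ j < n + 1, Real.pi * (y (j + 1) * √(t (j + 1) / t j)) =
        Real.exp ((extR0 z j - extR0 z (j + 1)) / 2) := fun j hj ↦ by
      rw [ht j (by lia), ht (j + 1) (by lia), pi_mul_mul_sqrt_div_eq_exp (h (j + 1) (by lia))]
    have hkernel := prod_cexp_mul_cpow_mul_cpow_eq_todaKernel (N := n + 2) (t := t) (z := z)
      (Nat.succ_ne_zero _) h (fun i ↦ by rw [ht i i.2, extR0_val]) (a 0)
    rw [ih (tildeA (n + 3) a) (extR0 z) _ hy, sumA_tildeA, hlast, ofReal_exp_cpow]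
    have hexp (L X Z S : ℂ) : cexp (-(((n + 1 : ℕ) * L + Z) / 2) * S) *
        cexp ((L + (X - Z)) * (-S / 2)) = cexp (-(((n + 1 + 1 : ℕ) * L + X) / 2) * S) := by
      rw [← Complex.exp_add]
      push_cast
      ring_nf
    rw [← hkernel, ← hexp _ _ (extR0 z (n + 1))]
    simp only [extR0_val, tildeA_div_two, todaPsi_add_const, ofReal_add, ofReal_sub]
    ring

end Whittaker

section ZetaIntegral

variable (n : ℕ) (a a' : ℕ → ℂ) (s : ℂ)

theorem whittAhat_eq_todaPsi (x y : ℕ → ℝ)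
    (h : ∀ j < n, Real.pi * y j = Real.exp ((x j - x (j + 1)) / 2)) :
    WhittAhat n a y = cexp (-(((n + 1) * Real.log Real.pi + x n) / 2) * sumA n a) *
      todaPsi n (fun j ↦ a j / 2) fun i ↦ x i := by
  obtain _ | n := n
  · simp [WhittAhat, WhittAr, sumA, todaPsi]
  rw [WhittAhat, whittAr_succ_eq_todaPsi n a x y fun j hj ↦ h j (hj.trans n.lt_succ_self),
    Nat.add_sub_cancel, eq_exp_sub_log_pi (h n n.lt_succ_self), ofReal_exp_cpow, ← mul_assoc,
    ← Complex.exp_add]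
  push_cast
  ring_nf

theorem prod_cpow_eq_cexp (x y : ℕ → ℝ)
    (h : ∀ j < n, Real.pi * y j = Real.exp ((x j - x (j + 1)) / 2)) :
    ∏ j ∈ Finset.range n, (y j : ℂ) ^ (((j + 1 : ℕ) : ℂ) * s) =
      cexp (s / 2 * (∑ j ∈ Finset.range n, (x j : ℂ) - n * x n)) *
        cexp (-Real.log Real.pi * (n * (n + 1) * s / 2)) := by
  have hterm : ∀ j ∈ Finset.range n, (y j : ℂ) ^ (((j + 1 : ℕ) : ℂ) * s) =
      cexp (s / 2 * ((j + 1) * (x j - x (j + 1))) + -Real.log Real.pi * s * (j + 1)) := by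
    intro j hj
    rw [eq_exp_sub_log_pi (h j (Finset.mem_range.1 hj)), ofReal_exp_cpow]
    push_cast
    ring_nf
  have hgauss : ∑ j ∈ Finset.range n, ((j : ℂ) + 1) = n * (n + 1) / 2 := by
    have hsum := Finset.sum_range_id_mul_two (n + 1)
    rw [Finset.sum_range_succ', add_zero, Nat.add_sub_cancel, mul_comm (n + 1)] at hsum
    rw [eq_div_iff two_ne_zero]
    exact_mod_cast hsum
  rw [Finset.prod_congr rfl hterm, ← Complex.exp_sum, Finset.sum_add_distrib, ← Finset.mul_sum,
    ← Finset.mul_sum, sum_range_succ_mul_sub_succ n fun j ↦ (x j : ℂ), hgauss, Complex.exp_add]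
  ring_nf

theorem whittAhat_mul_whittAhat_mul_prod_cpow (x : Fin n → ℝ) (y : ℕ → ℝ)
    (h : ∀ j < n, Real.pi * y j = Real.exp ((extR0 x j - extR0 x (j + 1)) / 2)) (hn : y n = 1) :
    WhittAhat (n + 1) a y * WhittAhat n a' y *
        ∏ j ∈ Finset.range n, (y j : ℂ) ^ (((j + 1 : ℕ) : ℂ) * s) =
      cexp (-Real.log Real.pi *
          ((n * sumA (n + 1) a + (n + 1) * sumA n a' + n * (n + 1) * s) / 2)) *
        (todaPsi (n + 1) (fun j ↦ a j / 2) (snocZero x) *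
          todaPsi n (fun j ↦ a' j / 2 + s / 2) x) := by
  have hzero : extR0 x n = 0 := by simp [extR0]
  rw [WhittAhat, Nat.add_sub_cancel, hn, ofReal_one, one_cpow, one_mul,
    whittAr_succ_eq_todaPsi n a _ y h, whittAhat_eq_todaPsi n a' _ y h,
    prod_cpow_eq_cexp n s _ y h, todaPsi_add_const]
  simp only [extR0_val_succ, extR0_val, hzero, Finset.sum_range, ofReal_sum, ofReal_zero,
    mul_zero, sub_zero, add_zero]
  have hexp (L S S' : ℂ) : cexp (-(n * L / 2) * S) * cexp (-((n + 1) * L / 2) * S') *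
      cexp (-L * (n * (n + 1) * s / 2)) =
        cexp (-L * ((n * S + (n + 1) * S' + n * (n + 1) * s) / 2)) := by
    rw [← Complex.exp_add, ← Complex.exp_add]
    ring_nf
  rw [← hexp]
  ring

theorem gammaR_eq_cexp_mul_Gamma (w : ℂ) :
    GammaR w = cexp (-Real.log Real.pi * (w / 2)) * Complex.Gamma (w / 2) := by
  rw [GammaR, cpow_def_of_ne_zero (ofReal_ne_zero.2 Real.pi_ne_zero), ofReal_log Real.pi_pos.le]
  ring_nf

theorem prod_gammaR_eq_cexp_mul_prod_Gamma (m : ℕ) :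
    ∏ j ∈ Finset.range n, ∏ k ∈ Finset.range m, GammaR (s + a j + a' k) =
      cexp (-Real.log Real.pi * ((m * sumA n a + n * sumA m a' + m * n * s) / 2)) *
        ∏ j ∈ Finset.range n, ∏ k ∈ Finset.range m,
          Complex.Gamma (a j / 2 + (a' k / 2 + s / 2)) := by
  have harg (j k : ℕ) : (s + a j + a' k) / 2 = a j / 2 + (a' k / 2 + s / 2) := by ring
  simp only [gammaR_eq_cexp_mul_Gamma, Finset.prod_mul_distrib, ← Complex.exp_sum, harg]
  congr 2
  simp only [Finset.sum_add_distrib, Finset.sum_const, Finset.card_range, nsmul_eq_mul, sumA,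
    ← Finset.mul_sum, ← Finset.sum_div]
  ring

theorem zetaGLm_succ_self_eq_integral_todaPsi :
    zetaGLm (n + 1) n a a' s =
      cexp (-Real.log Real.pi *
          ((n * sumA (n + 1) a + (n + 1) * sumA n a' + n * (n + 1) * s) / 2)) *
        ∫ x, todaPsi (n + 1) (fun j ↦ a j / 2) (snocZero x) *
          todaPsi n (fun j ↦ a' j / 2 + s / 2) x := by
  simp only [zetaGLm, Finset.prod_div_distrib, div_eq_mul_inv (∏ _ ∈ _, (_ : ℂ) ^ (_ : ℂ)),
    ← mul_assoc]
  rw [setIntegral_posSet_mul_inv_prod fun t ↦ WhittAhat (n + 1) a (extR t) *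
      WhittAhat n a' (extR t) * ∏ j ∈ Finset.range n, (extR t j : ℂ) ^ (((j + 1 : ℕ) : ℂ) * s),
    ← integral_comp_halfDiff_sub n (fun _ ↦ Real.log Real.pi) fun u ↦ _, ← integral_const_mul]
  refine integral_congr_ae (.of_forall fun x ↦ ?_)
  refine whittAhat_mul_whittAhat_mul_prod_cpow n a a' s x _ (fun j hj ↦ ?_) (by simp [extR])
  rw [extR, dif_pos hj, Pi.sub_apply, Real.exp_sub, Real.exp_log Real.pi_pos,
    mul_div_cancel₀ _ Real.pi_ne_zero, halfDiff, LinearMap.coe_mk, AddHom.coe_mk]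

theorem gl_glnminus1_zeta_eq_Lfactor_general
    (h : ∀ j < n + 1, ∀ k < n, 0 < (s + a j + a' k).re) :
    zetaGLm (n + 1) n a a' s =
      ∏ j ∈ Finset.range (n + 1), ∏ k ∈ Finset.range n, GammaR (s + a j + a' k) := by
  have hre : ∀ j < n + 1, ∀ k < n, 0 < (a j / 2 + (a' k / 2 + s / 2)).re := fun j hj k hk ↦ by
    have := h j hj k hk
    simp only [add_re, div_ofNat_re] at this ⊢
    linarith
  rw [zetaGLm_succ_self_eq_integral_todaPsi, integral_todaPsi_snocZero_mul_todaPsi n _ _ hre,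
    prod_gammaR_eq_cexp_mul_prod_Gamma, Nat.cast_succ]

end ZetaIntegral

/-- The archimedean `GL_n × GL_{n-1}` zeta integral equals its local `L`-factor
(Theorem 2.1(1) of Ishii–Stade). -/
theorem gl_glnminus1_zeta_eq_Lfactor (n : ℕ) (hn : 2 ≤ n)
    (a a' : ℕ → ℂ) (ha : ∀ j < n, (a j).re = 0) (ha' : ∀ k < n - 1, (a' k).re = 0)
    (s : ℂ) (hs : 0 < s.re) :
    zetaGLm n (n - 1) a a' s =
      ∏ j ∈ Finset.range n, ∏ k ∈ Finset.range (n - 1), GammaR (s + a j + a' k) := by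
  obtain ⟨m, rfl⟩ := Nat.exists_eq_add_of_le' (one_le_two.trans hn)
  exact gl_glnminus1_zeta_eq_Lfactor_general m a a' s fun j hj k hk ↦ by
    simpa [ha j hj, ha' k hk] using hs

end
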